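/- Let α be an irrational real number, let p be an integer and q a positive integer with p and q relatively prime, and let r be a nonzero integer and s a positive integer with r and s relatively prime. Set β := p/q + (r/s)α. Then lim_{n→∞} (1/n) ∑_{j=1}^n ({jβ} − {jα})² = 1/6 − gcd(s,q)² / (6 s r q²). -/

import Mathlib

open Filter Finset

open MeasureTheory Topology BoundedContinuousFunction
open scoped ENNReal

/-!
Modulo `1`, the pair `(jβ, jα)` is the image of `j • (1, α/s)` under a pair of characters of the
compact group `ℤ/q × ℝ/ℤ`. The rotation by `(1, α/s)` has dense orbits, so an invariant
probability measure is Haar measure; since cluster points of the empirical measures of an orbit are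
invariant, every orbit equidistributes. Writing `{jβ} − {jα}` as a difference of values of the
sawtooth `B₁({x}) = {x} − 1/2`, whose discontinuities are negligible, the limit is an integral over
the group. Its cross term follows by averaging over translations of order `N` and applying the
distribution relation `∑ₐ Bₖ({x + a/N}) = N¹⁻ᵏ Bₖ({Nx})`, which reduces the correlation of two
characters to the coprime case and then to `∫ B₁² = 1/12`.
-/

section AEContinuous

variable {X Y ι : Type*} [MeasurableSpace X] [TopologicalSpace X] [OpensMeasurableSpace X]
  [HasOuterApproxClosed X] {L : Filter ι} {μ : ProbabilityMeasure X} {ν : ι → ProbabilityMeasure X}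

/- The closure of `f ⁻¹' F` exceeds `f ⁻¹' F` only at discontinuity points of `f`. -/
lemma tendsto_map_of_ae_continuousAt [L.IsCountablyGenerated] [MeasurableSpace Y]
    [TopologicalSpace Y] [BorelSpace Y] (hν : Tendsto ν L (𝓝 μ))
    {f : X → Y} (hf : Measurable f) (hc : ∀ᵐ x ∂(μ : Measure X), ContinuousAt f x) :
    Tendsto (fun i ↦ (ν i).map hf.aemeasurable) L (𝓝 (μ.map hf.aemeasurable)) := by
  refine tendsto_of_forall_isClosed_limsup_le' fun F hF ↦ ?_
  simp only [ProbabilityMeasure.toMeasure_map, Measure.map_apply hf hF.measurableSet]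
  have closure_le : closure (f ⁻¹' F) ≤ᵐ[(μ : Measure X)] f ⁻¹' F := by
    filter_upwards [hc] with x hx hmem
    exact hF.closure_eq ▸ hx.continuousWithinAt.mem_closure hmem (Set.mapsTo_preimage f F)
  calc L.limsup (fun i ↦ (ν i : Measure X) (f ⁻¹' F))
      ≤ L.limsup (fun i ↦ (ν i : Measure X) (closure (f ⁻¹' F))) :=
        limsup_le_limsup (Eventually.of_forall fun i ↦ measure_mono subset_closure)
    _ ≤ (μ : Measure X) (closure (f ⁻¹' F)) :=
        ProbabilityMeasure.limsup_measure_closed_le_of_tendsto hν isClosed_closure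
    _ ≤ (μ : Measure X) (f ⁻¹' F) := measure_mono_ae closure_le

lemma tendsto_integral_of_ae_continuousAt [L.IsCountablyGenerated] (hν : Tendsto ν L (𝓝 μ))
    {f : X → ℝ} (hf : Measurable f) {C : ℝ} (hC : ∀ x, |f x| ≤ C)
    (hc : ∀ᵐ x ∂(μ : Measure X), ContinuousAt f x) :
    Tendsto (fun i ↦ ∫ x, f x ∂(ν i : Measure X)) L (𝓝 (∫ x, f x ∂(μ : Measure X))) := by
  let clamp : ℝ →ᵇ ℝ := BoundedContinuousFunction.ofNormedAddCommGroup
    (fun y ↦ max (-|C|) (min |C| y)) (by fun_prop) |C| fun y ↦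
      abs_le.2 ⟨le_max_left _ _, max_le (neg_le_self (abs_nonneg C)) (min_le_left _ _)⟩
  have clamp_comp (x : X) : clamp (f x) = f x := by
    have := abs_le.1 ((hC x).trans (le_abs_self C))
    simp [clamp, this]
  have integral_map_clamp (ρ : ProbabilityMeasure X) :
      ∫ y, clamp y ∂(ρ.map hf.aemeasurable : Measure ℝ) = ∫ x, f x ∂(ρ : Measure X) := by
    rw [ProbabilityMeasure.toMeasure_map, integral_map hf.aemeasurable
      clamp.continuous.aestronglyMeasurable]
    simp only [clamp_comp]
  simpa only [integral_map_clamp] using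
    ProbabilityMeasure.tendsto_iff_forall_integral_tendsto.1
      (tendsto_map_of_ae_continuousAt hν hf hc) clamp

end AEContinuous

section Birkhoff

variable {X : Type*} [MeasurableSpace X]

/-- The empirical measure of the first `n + 1` points of the orbit of `x` under `T`; the shift makes
it a probability measure for every `n`. -/
noncomputable def orbitMeasure (T : X → X) (x : X) (n : ℕ) : ProbabilityMeasure X :=
  ⟨((n + 1 : ℕ) : ℝ≥0∞)⁻¹ • ∑ k ∈ range (n + 1), Measure.dirac (T^[k] x), ⟨by
    simp [ENNReal.inv_mul_cancel]⟩⟩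

lemma integral_orbitMeasure (T : X → X) (x : X) (n : ℕ) {f : X → ℝ} (hf : StronglyMeasurable f) :
    ∫ y, f y ∂(orbitMeasure T x n : Measure X) = birkhoffAverage ℝ T f (n + 1) x := by
  rw [orbitMeasure, ProbabilityMeasure.coe_mk, integral_smul_measure,
    integral_finsetSum_measure fun k _ ↦ integrable_dirac' hf (by finiteness)]
  simp only [integral_dirac' _ _ hf, birkhoffAverage, birkhoffSum, ENNReal.toReal_inv,
    ENNReal.toReal_natCast]

variable [TopologicalSpace X] [BorelSpace X] [HasOuterApproxClosed X]

lemma map_eq_self_of_mapClusterPt_orbitMeasure {T : X → X} (hT : Continuous T) {x : X}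
    {ν : ProbabilityMeasure X} (hν : MapClusterPt ν atTop (orbitMeasure T x)) :
    ν.map hT.aemeasurable = ν := by
  have : IsProbabilityMeasure ((ν : Measure X).map T) :=
    Measure.isProbabilityMeasure_map hT.aemeasurable
  suffices (ν : Measure X).map T = ν from Subtype.ext this
  refine ext_of_forall_integral_eq_of_IsFiniteMeasure fun f ↦ ?_
  let fT : X →ᵇ ℝ := f.compContinuous ⟨T, hT⟩
  let defect (ρ : ProbabilityMeasure X) : ℝ :=
    ∫ y, fT y ∂(ρ : Measure X) - ∫ y, f y ∂(ρ : Measure X)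
  have defect_continuous : Continuous defect :=
    (ProbabilityMeasure.continuous_integral_boundedContinuousFunction fT).sub
      (ProbabilityMeasure.continuous_integral_boundedContinuousFunction f)
  have defect_orbitMeasure : Tendsto (defect ∘ orbitMeasure T x) atTop (𝓝 0) := by
    refine ((tendsto_birkhoffAverage_apply_sub_birkhoffAverage' ℝ f.isBounded_range T x).comp
      (tendsto_add_atTop_nat 1)).congr fun n ↦ ?_
    simp only [defect, Function.comp_apply,
      integral_orbitMeasure _ _ _ fT.continuous.stronglyMeasurable,
      integral_orbitMeasure _ _ _ f.continuous.stronglyMeasurable]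
    simp only [birkhoffAverage, birkhoffSum, fT, compContinuous_apply, ContinuousMap.coe_mk,
      ← Function.iterate_succ_apply, Function.iterate_succ_apply']
  have defect_eq_zero : defect ν = 0 :=
    eq_of_nhds_neBot (ClusterPt.mono (hν.continuousAt_comp defect_continuous.continuousAt)
      defect_orbitMeasure)
  rw [integral_map hT.aemeasurable f.continuous.aestronglyMeasurable]
  exact sub_eq_zero.1 defect_eq_zero

theorem tendsto_orbitMeasure_of_uniquelyErgodic [CompactSpace X] [T2Space X] {T : X → X}
    (hT : Continuous T) {μ : ProbabilityMeasure X}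
    (hμ : ∀ ν : ProbabilityMeasure X, ν.map hT.aemeasurable = ν → ν = μ) (x : X) :
    Tendsto (orbitMeasure T x) atTop (𝓝 μ) :=
  tendsto_nhds_of_unique_mapClusterPt fun ν hν ↦
    hμ ν (map_eq_self_of_mapClusterPt_orbitMeasure hT hν)

end Birkhoff

section Rotation

variable {G : Type*} [AddGroup G] [TopologicalSpace G] [IsTopologicalAddGroup G]
  [MeasurableSpace G] [BorelSpace G]

/-- The subgroup of those `g` for which the measure `ν` is invariant under `x ↦ g + x`, used to
pass from one `g` with dense multiples to full translation invariance. -/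
def invarianceSubgroup (ν : Measure G) : AddSubgroup G where
  carrier := {g | ν.map (g + ·) = ν}
  zero_mem' := by simp
  add_mem' {g h} (hg : ν.map (g + ·) = ν) (hh : ν.map (h + ·) = ν) := calc
    ν.map (g + h + ·) = (ν.map (h + ·)).map (g + ·) := by
      rw [Measure.map_map (by fun_prop) (by fun_prop)]
      simp only [Function.comp_def, add_assoc]
    _ = ν := by rw [hh, hg]
  neg_mem' {g} (hg : ν.map (g + ·) = ν) := calc
    ν.map (-g + ·) = (ν.map (g + ·)).map (-g + ·) := by rw [hg]
    _ = ν := by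
      rw [Measure.map_map (by fun_prop) (by fun_prop)]
      simp only [Function.comp_def, neg_add_cancel_left, Measure.map_id']

lemma mem_invarianceSubgroup {ν : Measure G} {g : G} :
    g ∈ invarianceSubgroup ν ↔ ν.map (g + ·) = ν := Iff.rfl

lemma isClosed_invarianceSubgroup [HasOuterApproxClosed G] [FirstCountableTopology G]
    (ν : Measure G) [IsFiniteMeasure ν] : IsClosed (invarianceSubgroup ν : Set G) := by
  have coe_eq : (invarianceSubgroup ν : Set G) =
      ⋂ f : G →ᵇ ℝ, {g | ∫ x, f (g + x) ∂ν = ∫ x, f x ∂ν} := by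
    ext g
    have integral_map_add (f : G →ᵇ ℝ) : ∫ x, f x ∂ν.map (g + ·) = ∫ x, f (g + x) ∂ν :=
      integral_map (by fun_prop) f.continuous.aestronglyMeasurable
    simp only [SetLike.mem_coe, mem_invarianceSubgroup, Set.mem_iInter, Set.mem_ofPred_eq,
      ← integral_map_add]
    exact ⟨fun h f ↦ by rw [h], ext_of_forall_integral_eq_of_IsFiniteMeasure⟩
  rw [coe_eq]
  refine isClosed_iInter fun f ↦ isClosed_eq ?_ continuous_const
  exact continuous_of_dominated
    (fun g ↦ (f.continuous.comp (continuous_const_add g)).aestronglyMeasurable)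
    (fun g ↦ ae_of_all ν fun x ↦ f.norm_coe_le_norm (g + x)) (integrable_const ‖f‖)
    (ae_of_all ν fun x ↦ f.continuous.comp (continuous_add_const x))

theorem eq_addHaar_of_map_add_left_eq_self [CompactSpace G] [HasOuterApproxClosed G]
    [FirstCountableTopology G] {μ ν : Measure G} [μ.IsAddHaarMeasure] [IsProbabilityMeasure μ]
    [IsProbabilityMeasure ν] {g : G} (hg : DenseRange fun n : ℤ ↦ n • g) (hν : ν.map (g + ·) = ν) :
    ν = μ := by
  have range_subset : Set.range (fun n : ℤ ↦ n • g) ⊆ invarianceSubgroup ν :=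
    Set.range_subset_iff.2 fun n ↦ zsmul_mem (mem_invarianceSubgroup.2 hν) n
  have : ν.IsAddLeftInvariant := ⟨fun h ↦ mem_invarianceSubgroup.1 <|
    (isClosed_invarianceSubgroup ν).closure_subset_iff.2 range_subset (hg h)⟩
  have : ν.IsAddHaarMeasure := Measure.isAddHaarMeasure_of_isCompact_nonempty_interior ν
    Set.univ isCompact_univ (by simp) (by simp) (by simp)
  exact Measure.isAddHaarMeasure_eq_of_isProbabilityMeasure ν μ

theorem tendsto_average_nsmul_of_ae_continuousAt [CompactSpace G] [T2Space G]
    [HasOuterApproxClosed G] [FirstCountableTopology G] {μ : Measure G} [μ.IsAddHaarMeasure]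
    [IsProbabilityMeasure μ] {g : G} (hg : DenseRange fun n : ℤ ↦ n • g) {f : G → ℝ}
    (hf : Measurable f) {C : ℝ} (hC : ∀ x, |f x| ≤ C) (hc : ∀ᵐ x ∂μ, ContinuousAt f x) :
    Tendsto (fun n : ℕ ↦ (1 / (n : ℝ)) * ∑ j ∈ Icc 1 n, f (j • g)) atTop (𝓝 (∫ x, f x ∂μ)) := by
  have rotation_continuous : Continuous (g + ·) := continuous_const_add g
  have orbit : Tendsto (orbitMeasure (g + ·) g) atTop (𝓝 ⟨μ, inferInstance⟩) :=
    tendsto_orbitMeasure_of_uniquelyErgodic rotation_continuous (fun ν hν ↦ Subtype.ext <|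
      eq_addHaar_of_map_add_left_eq_self (ν := (ν : Measure G)) hg (congrArg Subtype.val hν)) g
  refine (tendsto_add_atTop_iff_nat 1).1
    ((tendsto_integral_of_ae_continuousAt orbit hf hC hc).congr fun n ↦ ?_)
  rw [integral_orbitMeasure _ _ _ hf.stronglyMeasurable, birkhoffAverage, birkhoffSum,
    smul_eq_mul, one_div, range_eq_Ico, ← Ico_add_one_right_eq_Icc, ← zero_add 1,
    ← sum_Ico_add', zero_add]
  simp only [add_left_iterate, succ_nsmul]

end Rotation

section PeriodizedBernoulli

lemma periodizedBernoulli_coe (k : ℕ) (x : ℝ) :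
    periodizedBernoulli k x = bernoulliFun k (Int.fract x) := by
  rw [← AddCircle.coe_fract, periodizedBernoulli,
    AddCircle.liftIco_zero_coe_apply ⟨Int.fract_nonneg x, Int.fract_lt_one x⟩]

lemma periodizedBernoulli_neg (k : ℕ) {x : UnitAddCircle} (hx : x ≠ 0) :
    periodizedBernoulli k (-x) = (-1) ^ k * periodizedBernoulli k x := by
  induction x using QuotientAddGroup.induction_on with | H y => ?_
  have fract_ne_zero : Int.fract y ≠ 0 := fun h ↦ hx <| by
    rw [← AddCircle.coe_fract, h, AddCircle.coe_zero]
  rw [← AddCircle.coe_neg, periodizedBernoulli_coe, periodizedBernoulli_coe,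
    Int.fract_neg fract_ne_zero, bernoulliFun_eval_one_sub]

lemma continuousAt_periodizedBernoulli (k : ℕ) {x : UnitAddCircle} (hx : x ≠ 0) :
    ContinuousAt (periodizedBernoulli k) x :=
  ((continuous_bernoulliFun k).comp continuous_subtype_val).continuousAt.comp
    (AddCircle.continuousAt_equivIco 1 0 hx)

lemma measurable_periodizedBernoulli (k : ℕ) : Measurable (periodizedBernoulli k) :=
  ((continuous_bernoulliFun k).measurable.comp measurable_subtype_coe).comp
    (AddCircle.measurableEquivIco 1 0).measurable

lemma exists_abs_periodizedBernoulli_le (k : ℕ) : ∃ C, ∀ x, |periodizedBernoulli k x| ≤ C := by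
  obtain ⟨C, hC⟩ := isCompact_Icc.exists_bound_of_continuousOn
    (continuous_bernoulliFun k).continuousOn (s := Set.Icc 0 1)
  refine ⟨C, fun x ↦ ?_⟩
  induction x using QuotientAddGroup.induction_on with | H y => ?_
  exact periodizedBernoulli_coe k y ▸ hC _ ⟨Int.fract_nonneg y, (Int.fract_lt_one y).le⟩

lemma periodizedBernoulli_coe_add_toAddCircle (k : ℕ) {N : ℕ} [NeZero N] {t : ℝ} (ht : 0 ≤ t)
    (htN : t < 1 / N) (a : ZMod N) :
    periodizedBernoulli k (t + ZMod.toAddCircle a) = bernoulliFun k (t + a.val / N) := by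
  have N_pos : (0 : ℝ) < N := Nat.cast_pos.2 (NeZero.pos N)
  have lt_one : t + a.val / N < 1 := calc
    t + a.val / N < 1 / N + a.val / N := by gcongr
    _ = (a.val + 1) / N := by ring
    _ ≤ 1 := (div_le_one N_pos).2 (mod_cast ZMod.val_lt a)
  rw [ZMod.toAddCircle_apply, ← AddCircle.coe_add, periodizedBernoulli_coe,
    Int.fract_eq_self.2 ⟨by positivity, lt_one⟩]

lemma periodizedBernoulli_natCast_nsmul (k : ℕ) (N : ℕ) [NeZero N] (x : UnitAddCircle) :
    periodizedBernoulli k (N • x) =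
      (N : ℝ) ^ k / N * ∑ a : ZMod N, periodizedBernoulli k (x + ZMod.toAddCircle a) := by
  induction x using QuotientAddGroup.induction_on with | H y => ?_
  have N_pos : (0 : ℝ) < N := Nat.cast_pos.2 (NeZero.pos N)
  set t : ℝ := Int.fract (N * y) / N with ht
  have coe_y : (y : UnitAddCircle) = t + ZMod.toAddCircle (⌊N * y⌋ : ZMod N) := by
    rw [ZMod.toAddCircle_intCast, ← AddCircle.coe_add, ← add_div, Int.fract_add_floor,
      mul_div_cancel_left₀ _ N_pos.ne']
  have value (a : ZMod N) :
      periodizedBernoulli k (t + ZMod.toAddCircle a) = bernoulliFun k (t + a.val / N) :=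
    periodizedBernoulli_coe_add_toAddCircle k (by positivity)
      (div_lt_div_of_pos_right (Int.fract_lt_one _) N_pos) a
  calc periodizedBernoulli k (N • (y : UnitAddCircle))
      = bernoulliFun k (N * t) := by
        rw [← AddCircle.coe_nsmul, nsmul_eq_mul, periodizedBernoulli_coe, ht,
          mul_div_cancel₀ _ N_pos.ne']
    _ = (N : ℝ) ^ k / N * ∑ i ∈ range N, bernoulliFun k (t + i / N) :=
        bernoulliFun_mul k (NeZero.ne N) t
    _ = (N : ℝ) ^ k / N * ∑ a : ZMod N, periodizedBernoulli k (t + ZMod.toAddCircle a) := by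
        simp only [value]
        congr 1
        exact sum_nbij' (Nat.cast : ℕ → ZMod N) ZMod.val (by simp) (by simp [ZMod.val_lt])
          (fun i hi ↦ ZMod.val_cast_of_lt (mem_range.1 hi)) (by simp)
          (fun i hi ↦ by rw [ZMod.val_cast_of_lt (mem_range.1 hi)])
    _ = (N : ℝ) ^ k / N * ∑ a : ZMod N, periodizedBernoulli k (y + ZMod.toAddCircle a) := by
        simp only [coe_y, add_assoc, ← map_add]
        congr 1
        exact (Equiv.sum_comp (Equiv.addLeft (⌊N * y⌋ : ZMod N))
          fun a ↦ periodizedBernoulli k (t + ZMod.toAddCircle a)).symm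

section Integrability

variable {X : Type*} [MeasurableSpace X] {μ : Measure X}

lemma ae_ne_zero_of_measurePreserving {φ : X → UnitAddCircle} (hφ : MeasurePreserving φ μ volume) :
    ∀ᵐ x ∂μ, φ x ≠ 0 :=
  hφ.quasiMeasurePreserving.ae (compl_mem_ae_iff.2 (by
    simpa using AddCircle.volume_closedBall 1 (x := (0 : UnitAddCircle)) 0))

lemma integrable_periodizedBernoulli_comp_mul_comp [IsFiniteMeasure μ] (k : ℕ)
    {φ ψ : X → UnitAddCircle} (hφ : Measurable φ) (hψ : Measurable ψ) :
    Integrable (fun x ↦ periodizedBernoulli k (φ x) * periodizedBernoulli k (ψ x)) μ := by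
  obtain ⟨C, hC⟩ := exists_abs_periodizedBernoulli_le k
  have hB := measurable_periodizedBernoulli k
  refine .of_bound (by fun_prop) (C * C) (ae_of_all μ fun x ↦ ?_)
  rw [norm_mul]
  exact mul_le_mul (hC _) (hC _) (norm_nonneg _) ((abs_nonneg _).trans (hC 0))

lemma integral_periodizedBernoulli_sub_sq (k : ℕ) {φ ψ : X → UnitAddCircle}
    (hφ : MeasurePreserving φ μ volume) (hψ : MeasurePreserving ψ μ volume) :
    ∫ x, (periodizedBernoulli k (φ x) - periodizedBernoulli k (ψ x)) ^ 2 ∂μ =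
      2 * ((∫ x : UnitAddCircle, periodizedBernoulli k x ^ 2) -
        ∫ x, periodizedBernoulli k (φ x) * periodizedBernoulli k (ψ x) ∂μ) := by
  have : IsFiniteMeasure μ := ⟨by
    rw [← Set.preimage_univ (f := φ), hφ.measure_preimage nullMeasurableSet_univ]
    exact measure_lt_top volume Set.univ⟩
  have integral_sq {χ : X → UnitAddCircle} (hχ : MeasurePreserving χ μ volume) :
      ∫ x, periodizedBernoulli k (χ x) * periodizedBernoulli k (χ x) ∂μ =
        ∫ x : UnitAddCircle, periodizedBernoulli k x ^ 2 := by
    simp only [← hχ.map_eq, ← sq, integral_map hχ.aemeasurable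
      ((measurable_periodizedBernoulli k).pow_const 2).aestronglyMeasurable]
  have integrable_mul {χ χ' : X → UnitAddCircle} (hχ : MeasurePreserving χ μ volume)
      (hχ' : MeasurePreserving χ' μ volume) :=
    integrable_periodizedBernoulli_comp_mul_comp (μ := μ) k hχ.measurable hχ'.measurable
  have diff_integrable : Integrable (fun x ↦ periodizedBernoulli k (φ x) *
      periodizedBernoulli k (φ x) - 2 * (periodizedBernoulli k (φ x) *
        periodizedBernoulli k (ψ x))) μ :=
    (integrable_mul hφ hφ).sub ((integrable_mul hφ hψ).const_mul 2)
  simp only [sub_sq, mul_assoc, sq (periodizedBernoulli k (φ _)), sq (periodizedBernoulli k (ψ _))]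
  rw [integral_add diff_integrable (integrable_mul hψ hψ), integral_sub (integrable_mul hφ hφ)
    ((integrable_mul hφ hψ).const_mul 2), integral_const_mul, integral_sq hφ, integral_sq hψ]
  ring

end Integrability

lemma pow_mul_integral_periodizedBernoulli_mul {G : Type*} [AddGroup G] [MeasurableSpace G]
    [MeasurableAdd G] {μ : Measure G} [μ.IsAddRightInvariant] (k : ℕ) {N : ℕ} [NeZero N]
    {u : ZMod N} (hu : IsUnit u) {h : G} {φ : G → UnitAddCircle}
    (hφ : ∀ x, φ (x + h) = φ x + ZMod.toAddCircle u) {f : G → ℝ} (hf : Function.Periodic f h)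
    (hint : Integrable (fun x ↦ periodizedBernoulli k (φ x) * f x) μ) :
    (N : ℝ) ^ k * ∫ x, periodizedBernoulli k (φ x) * f x ∂μ =
      ∫ x, periodizedBernoulli k (N • φ x) * f x ∂μ := by
  have φ_translate (j : ℕ) (x : G) : φ (x + j • h) = φ x + j • ZMod.toAddCircle u := by
    have semiconj : Function.Semiconj φ (· + h) (· + ZMod.toAddCircle u) := hφ
    simpa only [add_right_iterate] using semiconj.iterate_right j x
  have translate (a : ZMod N) (x : G) :
      periodizedBernoulli k (φ x + ZMod.toAddCircle (a * u)) * f x =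
        periodizedBernoulli k (φ (x + a.val • h)) * f (x + a.val • h) := by
    rw [φ_translate, hf.nsmul, ← map_nsmul, nsmul_eq_mul, ZMod.natCast_zmod_val]
  have distribution (x : G) : periodizedBernoulli k (N • φ x) * f x = N ^ k / N *
      ∑ a : ZMod N, periodizedBernoulli k (φ x + ZMod.toAddCircle (a * u)) * f x := by
    rw [periodizedBernoulli_natCast_nsmul, mul_assoc, sum_mul, ← Equiv.sum_comp hu.unit.mulRight]
    rfl
  have N_ne : (N : ℝ) ≠ 0 := NeZero.ne _
  simp only [distribution, translate]
  rw [integral_const_mul, integral_finsetSum _ fun a _ ↦ hint.comp_add_right (a.val • h)]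
  simp only [integral_add_right_eq_self (fun x ↦ periodizedBernoulli k (φ x) * f x), sum_const,
    card_univ, ZMod.card, nsmul_eq_mul]
  field_simp

lemma integral_periodizedBernoulli_one_sq :
    ∫ x : UnitAddCircle, periodizedBernoulli 1 x ^ 2 = 1 / 12 := by
  have integral_eq : ∫ x : ℝ in 0..0 + 1, periodizedBernoulli 1 x ^ 2 =
      ∫ x : ℝ in 0..0 + 1, (x - 1 / 2) ^ 2 := by
    refine intervalIntegral.integral_congr_Ioo_of_le (by norm_num) fun x hx ↦ ?_
    rw [zero_add] at hx
    simp only [periodizedBernoulli_coe, bernoulliFun_one, Int.fract_eq_self.2 ⟨hx.1.le, hx.2⟩]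
  rw [← UnitAddCircle.intervalIntegral_preimage 0, integral_eq,
    intervalIntegral.integral_comp_sub_right (· ^ 2), integral_pow]
  norm_num

lemma integral_comp_nsmul {T : ℝ} [Fact (0 < T)] {E : Type*} [NormedAddCommGroup E]
    [NormedSpace ℝ E] {n : ℕ} (hn : n ≠ 0) {f : AddCircle T → E}
    (hf : AEStronglyMeasurable f volume) : ∫ x, f (n • x) = ∫ x, f x := by
  have nsmul_preserving : MeasurePreserving (fun x : AddCircle T ↦ n • x) := by
    simpa only [natCast_zsmul] using
      Measure.measurePreserving_zsmul (volume : Measure (AddCircle T)) (Nat.cast_ne_zero.2 hn)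
  rw [← integral_map nsmul_preserving.aemeasurable (nsmul_preserving.map_eq.symm ▸ hf),
    nsmul_preserving.map_eq]

lemma pow_mul_integral_periodizedBernoulli_nsmul_mul_nsmul_of_coprime (k : ℕ) {m n : ℕ}
    (hm : m ≠ 0) (hmn : m.Coprime n) :
    (m : ℝ) ^ k *
        ∫ x : UnitAddCircle, periodizedBernoulli k (n • x) * periodizedBernoulli k (m • x) =
      ∫ x : UnitAddCircle, periodizedBernoulli k (n • x) * periodizedBernoulli k x := by
  have : NeZero m := ⟨hm⟩
  have hB := measurable_periodizedBernoulli k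
  have nsmul_translate (l : ℕ) (x : UnitAddCircle) :
      l • (x + ZMod.toAddCircle (1 : ZMod m)) = l • x + ZMod.toAddCircle (l : ZMod m) := by
    rw [nsmul_add, ← map_nsmul, nsmul_one]
  calc (m : ℝ) ^ k *
        ∫ x : UnitAddCircle, periodizedBernoulli k (n • x) * periodizedBernoulli k (m • x)
      = ∫ x : UnitAddCircle, periodizedBernoulli k (m • n • x) * periodizedBernoulli k (m • x) :=
        pow_mul_integral_periodizedBernoulli_mul k ((ZMod.isUnit_iff_coprime n m).2 hmn.symm)
          (nsmul_translate n) (fun x ↦ by simp [nsmul_translate])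
          (integrable_periodizedBernoulli_comp_mul_comp k (by fun_prop) (by fun_prop))
    _ = ∫ x : UnitAddCircle, periodizedBernoulli k (n • x) * periodizedBernoulli k x := by
        simp only [smul_comm m n]
        exact integral_comp_nsmul hm
          (f := fun x ↦ periodizedBernoulli k (n • x) * periodizedBernoulli k x) (by fun_prop)

lemma pow_mul_integral_periodizedBernoulli_nsmul_mul_nsmul (k : ℕ) {m n : ℕ}
    (hm : m ≠ 0) (hn : n ≠ 0) :
    ((m : ℝ) * n) ^ k *
        ∫ x : UnitAddCircle, periodizedBernoulli k (m • x) * periodizedBernoulli k (n • x) =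
      (m.gcd n : ℝ) ^ (2 * k) * ∫ x : UnitAddCircle, periodizedBernoulli k x ^ 2 := by
  have hB := measurable_periodizedBernoulli k
  obtain ⟨a, b, hab, ha, hb⟩ := Nat.exists_coprime m n
  have gcd_ne : m.gcd n ≠ 0 := Nat.gcd_ne_zero_left hm
  generalize m.gcd n = d at *
  subst ha hb
  have a_ne : a ≠ 0 := left_ne_zero_of_mul hm
  have b_ne : b ≠ 0 := left_ne_zero_of_mul hn
  have coprime_case : ((a : ℝ) * b) ^ k *
      ∫ x : UnitAddCircle, periodizedBernoulli k (a • x) * periodizedBernoulli k (b • x) =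
      ∫ x : UnitAddCircle, periodizedBernoulli k x ^ 2 := by
    have strip_a :=
      pow_mul_integral_periodizedBernoulli_nsmul_mul_nsmul_of_coprime k a_ne a.coprime_one_right
    have strip_b :=
      pow_mul_integral_periodizedBernoulli_nsmul_mul_nsmul_of_coprime k b_ne hab.symm
    simp only [one_nsmul] at strip_a
    rw [mul_pow, mul_assoc, strip_b]
    simp only [mul_comm (periodizedBernoulli k (a • _)), strip_a, sq]
  simp only [mul_nsmul']
  rw [integral_comp_nsmul gcd_ne
    (f := fun x ↦ periodizedBernoulli k (a • x) * periodizedBernoulli k (b • x)) (by fun_prop),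
    ← coprime_case]
  push_cast
  ring

lemma ae_periodizedBernoulli_zsmul (k : ℕ) {n : ℤ} (hn : n ≠ 0) :
    ∀ᵐ x : UnitAddCircle, periodizedBernoulli k (n • x) =
      (n.sign : ℝ) ^ k * periodizedBernoulli k (n.natAbs • x) := by
  filter_upwards [ae_ne_zero_of_measurePreserving (Measure.measurePreserving_zsmul volume hn)]
    with x hx
  rcases lt_or_gt_of_ne hn with n_neg | n_pos
  · rw [Int.sign_eq_neg_one_of_neg n_neg, ← natCast_zsmul, Int.natCast_natAbs, abs_of_neg n_neg,
      Int.cast_neg, Int.cast_one, ← periodizedBernoulli_neg k (by simpa using hx), neg_smul,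
      neg_neg]
  · rw [Int.sign_eq_one_of_pos n_pos, ← natCast_zsmul, Int.natCast_natAbs, abs_of_pos n_pos,
      Int.cast_one, one_pow, one_mul]

theorem pow_mul_integral_periodizedBernoulli_zsmul_mul_zsmul (k : ℕ) {m n : ℤ}
    (hm : m ≠ 0) (hn : n ≠ 0) :
    ((m : ℝ) * n) ^ k *
        ∫ x : UnitAddCircle, periodizedBernoulli k (m • x) * periodizedBernoulli k (n • x) =
      (m.gcd n : ℝ) ^ (2 * k) * ∫ x : UnitAddCircle, periodizedBernoulli k x ^ 2 := by
  have mul_sign (a : ℤ) : (a : ℝ) * a.sign = a.natAbs := by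
    rw [← Int.cast_mul, Int.mul_sign_self, Int.cast_natCast]
  have integral_eq :
      ∫ x : UnitAddCircle, periodizedBernoulli k (m • x) * periodizedBernoulli k (n • x) =
        (m.sign * n.sign : ℝ) ^ k * ∫ x : UnitAddCircle,
          periodizedBernoulli k (m.natAbs • x) * periodizedBernoulli k (n.natAbs • x) := by
    rw [← integral_const_mul]
    refine integral_congr_ae ?_
    filter_upwards [ae_periodizedBernoulli_zsmul k hm, ae_periodizedBernoulli_zsmul k hn]
      with x hxm hxn
    rw [hxm, hxn, mul_mul_mul_comm, mul_pow]
  rw [integral_eq, ← mul_assoc, ← mul_pow, mul_mul_mul_comm, mul_sign, mul_sign,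
    pow_mul_integral_periodizedBernoulli_nsmul_mul_nsmul k (Int.natAbs_ne_zero.2 hm)
      (Int.natAbs_ne_zero.2 hn), Int.gcd]

end PeriodizedBernoulli

section ResidueTimesCircle

lemma denseRange_zsmul_one_prod {T : ℝ} [Fact (0 < T)] {q : ℕ} [NeZero q] {θ : AddCircle T}
    (hθ : DenseRange fun n : ℤ ↦ n • θ) :
    DenseRange fun n : ℤ ↦ n • ((1, θ) : ZMod q × AddCircle T) := by
  have dense_multiples : DenseRange fun n : ℤ ↦ n • q • θ := by
    rw [AddCircle.denseRange_zsmul_iff, addOrderOf_eq_zero_iff] at hθ ⊢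
    exact fun h ↦ hθ (h.of_nsmul (NeZero.ne q))
  rintro ⟨a, x⟩
  have section_continuous : Continuous fun y : AddCircle T ↦ (a, y + a.val • θ) := by fun_prop
  have mem := map_mem_closure section_continuous (dense_multiples (x - a.val • θ))
    (t := Set.range fun n : ℤ ↦ n • ((1, θ) : ZMod q × AddCircle T)) <| by
      rintro _ ⟨n, rfl⟩
      refine ⟨n * q + a.val, Prod.ext ?_ ?_⟩
      · simp
      · simp [add_zsmul, mul_zsmul, -ZMod.natCast_val]
  simpa using mem

variable {q : ℕ} [NeZero q]

/-- The character `(a, x) ↦ p a / q + r x` of `ℤ/q × ℝ/ℤ`, with values in `ℝ/ℤ`. At `j • (1, θ)` it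
takes the value `j (p / q + r θ)`, so that it reads off `jβ` and `jα` from one orbit. -/
noncomputable def phase (q : ℕ) [NeZero q] (p r : ℤ) : ZMod q × UnitAddCircle →+ UnitAddCircle :=
  (p • ZMod.toAddCircle).coprod (zsmulAddGroupHom r)

lemma phase_apply (p r : ℤ) (x : ZMod q × UnitAddCircle) :
    phase q p r x = p • ZMod.toAddCircle x.1 + r • x.2 := rfl

lemma phase_one_coe (p r : ℤ) (x : ℝ) : phase q p r (1, x) = ↑(p / q + r * x : ℝ) := by
  have toAddCircle_one : ZMod.toAddCircle (1 : ZMod q) = ↑((q : ℝ)⁻¹) := by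
    simpa using ZMod.toAddCircle_natCast (N := q) 1
  rw [phase_apply, toAddCircle_one, ← AddCircle.coe_zsmul, ← AddCircle.coe_zsmul,
    ← AddCircle.coe_add, zsmul_eq_mul, zsmul_eq_mul, div_eq_mul_inv]

lemma nsmul_phase (p r : ℤ) (x : ZMod q × UnitAddCircle) :
    q • phase q p r x = (q * r : ℤ) • x.2 := by
  have nsmul_toAddCircle : q • ZMod.toAddCircle x.1 = 0 := by simp [← map_nsmul]
  rw [phase_apply, nsmul_add, smul_comm q p, nsmul_toAddCircle, smul_zero, zero_add, mul_zsmul,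
    natCast_zsmul]

lemma continuous_phase (p r : ℤ) : Continuous (phase q p r) := by
  simp only [funext (phase_apply p r)]
  fun_prop

variable {μ : Measure (ZMod q × UnitAddCircle)} [μ.IsAddHaarMeasure] [IsProbabilityMeasure μ]

lemma measurePreserving_phase (p : ℤ) {r : ℤ} (hr : r ≠ 0) :
    MeasurePreserving (phase q p r) μ volume := by
  refine AddMonoidHom.measurePreserving (continuous_phase p r) (fun y ↦ ?_) (by simp)
  obtain ⟨x, hx⟩ := DivisibleBy.surjective_smul UnitAddCircle ℤ hr y
  exact ⟨(0, x), by simpa [phase_apply] using hx⟩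

theorem pow_mul_integral_periodizedBernoulli_phase_mul_phase (k : ℕ) {p r s : ℤ}
    (hpq : IsCoprime p q) (hr : r ≠ 0) (hs : s ≠ 0) :
    ((q : ℝ) ^ 2 * r * s) ^ k * ∫ x, periodizedBernoulli k (phase q p r x) *
        periodizedBernoulli k (phase q 0 s x) ∂μ =
      (Int.gcd (q * r) s : ℝ) ^ (2 * k) * ∫ x : UnitAddCircle, periodizedBernoulli k x ^ 2 := by
  have hB := measurable_periodizedBernoulli k
  have averaged := pow_mul_integral_periodizedBernoulli_mul (μ := μ) k
    ((ZMod.coe_int_isUnit_iff_isCoprime p q).2 hpq.symm) (h := (1, 0))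
    (φ := phase q p r) (f := fun x ↦ periodizedBernoulli k (phase q 0 s x))
    (fun x ↦ by simp [phase_apply, ← map_zsmul, add_right_comm])
    (fun x ↦ by simp [phase_apply])
    (integrable_periodizedBernoulli_comp_mul_comp k (continuous_phase p r).measurable
      (continuous_phase 0 s).measurable)
  have snd_preserving : MeasurePreserving Prod.snd μ volume := by
    simpa [funext (phase_apply 0 1)] using! measurePreserving_phase (μ := μ) 0 one_ne_zero
  have integral_snd : ∫ x, periodizedBernoulli k (q • phase q p r x) *
      periodizedBernoulli k (phase q 0 s x) ∂μ =
        ∫ y : UnitAddCircle, periodizedBernoulli k ((q * r : ℤ) • y) *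
          periodizedBernoulli k (s • y) := by
    rw [← snd_preserving.map_eq, integral_map (by fun_prop) (by fun_prop)]
    simp only [nsmul_phase]
    simp only [phase_apply, zero_smul, zero_add]
  rw [← pow_mul_integral_periodizedBernoulli_zsmul_mul_zsmul k
    (mul_ne_zero (mod_cast NeZero.ne q) hr) hs, ← integral_snd, ← averaged]
  push_cast
  ring

end ResidueTimesCircle

section MeanSquare

theorem tendsto_average_periodizedBernoulli_sub_sq {G : Type*} [AddGroup G] [TopologicalSpace G]
    [IsTopologicalAddGroup G] [MeasurableSpace G] [BorelSpace G] [CompactSpace G] [T2Space G]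
    [HasOuterApproxClosed G] [FirstCountableTopology G] {μ : Measure G} [μ.IsAddHaarMeasure]
    [IsProbabilityMeasure μ] (k : ℕ) {g : G} (hg : DenseRange fun n : ℤ ↦ n • g)
    {φ ψ : G → UnitAddCircle} (φ_continuous : Continuous φ) (ψ_continuous : Continuous ψ)
    (hφ : MeasurePreserving φ μ volume) (hψ : MeasurePreserving ψ μ volume) :
    Tendsto (fun n : ℕ ↦ (1 / (n : ℝ)) * ∑ j ∈ Icc 1 n,
        (periodizedBernoulli k (φ (j • g)) - periodizedBernoulli k (ψ (j • g))) ^ 2) atTop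
      (𝓝 (2 * ((∫ x : UnitAddCircle, periodizedBernoulli k x ^ 2) -
        ∫ x, periodizedBernoulli k (φ x) * periodizedBernoulli k (ψ x) ∂μ))) := by
  have hB := measurable_periodizedBernoulli k
  obtain ⟨C, hC⟩ := exists_abs_periodizedBernoulli_le k
  rw [← integral_periodizedBernoulli_sub_sq k hφ hψ]
  refine tendsto_average_nsmul_of_ae_continuousAt hg (C := (C + C) ^ 2) ?_ (fun x ↦ ?_) ?_
  · exact ((hB.comp hφ.measurable).sub (hB.comp hψ.measurable)).pow_const 2
  · rw [abs_pow]
    gcongr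
    exact (abs_sub _ _).trans (add_le_add (hC _) (hC _))
  · filter_upwards [ae_ne_zero_of_measurePreserving hφ, ae_ne_zero_of_measurePreserving hψ]
      with x hφx hψx
    exact (((continuousAt_periodizedBernoulli k hφx).comp φ_continuous.continuousAt).sub
      ((continuousAt_periodizedBernoulli k hψx).comp ψ_continuous.continuousAt)).pow 2

lemma integral_periodizedBernoulli_one_phase_mul_phase {q : ℕ} [NeZero q]
    {μ : Measure (ZMod q × UnitAddCircle)} [μ.IsAddHaarMeasure] [IsProbabilityMeasure μ]
    {p r s : ℤ} (hpq : IsCoprime p q) (hr : r ≠ 0) (hs : s ≠ 0) (hrs : Int.gcd r s = 1) :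
    ∫ x, periodizedBernoulli 1 (phase q p r x) * periodizedBernoulli 1 (phase q 0 s x) ∂μ =
      (Int.gcd s q : ℝ) ^ 2 / (12 * s * r * q ^ 2) := by
  have correlation := pow_mul_integral_periodizedBernoulli_phase_mul_phase (μ := μ) 1 hpq hr hs
  have gcd_eq : Int.gcd (q * r) s = Int.gcd s q := by
    rw [Int.gcd_comm, Int.gcd_mul_left_right_of_gcd_eq_one (Int.gcd_comm r s ▸ hrs)]
  have q_ne : (q : ℝ) ≠ 0 := NeZero.ne _
  have r_ne : (r : ℝ) ≠ 0 := Int.cast_ne_zero.2 hr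
  have s_ne : (s : ℝ) ≠ 0 := Int.cast_ne_zero.2 hs
  rw [gcd_eq, pow_one, mul_one, integral_periodizedBernoulli_one_sq] at correlation
  rw [eq_div_iff (by positivity)]
  linear_combination 12 * correlation

lemma periodizedBernoulli_one_nsmul_coe_sub (j : ℕ) (x y : ℝ) :
    periodizedBernoulli 1 (j • (x : UnitAddCircle)) - periodizedBernoulli 1 (j • ↑y) =
      Int.fract (j * x) - Int.fract (j * y) := by
  simp only [← AddCircle.coe_nsmul, periodizedBernoulli_coe, bernoulliFun_one, nsmul_eq_mul,
    sub_sub_sub_cancel_right]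

end MeanSquare

/-- Let `α` be irrational, `p, q` coprime with `q > 0`, `r ≠ 0` and `s > 0` coprime,
and `β = p/q + (r/s)α`. Then
`lim_{n→∞} (1/n) ∑_{j=1}^n ({jβ} − {jα})² = 1/6 − gcd(s,q)²/(6srq²)`. -/
theorem stmt_15 (α : ℝ) (hα : Irrational α) (p q r s : ℤ)
    (hq : 0 < q) (hpq : Int.gcd p q = 1) (hr : r ≠ 0) (hs : 0 < s) (hrs : Int.gcd r s = 1)
    (β : ℝ) (hβ : β = (p : ℝ) / (q : ℝ) + ((r : ℝ) / (s : ℝ)) * α) :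
    Tendsto
      (fun n : ℕ =>
        (1 / (n : ℝ)) *
          ∑ j ∈ Finset.Icc 1 n,
            (Int.fract ((j : ℝ) * β) - Int.fract ((j : ℝ) * α)) ^ 2)
      atTop
      (nhds (1 / 6 - (Int.gcd s q : ℝ) ^ 2 / (6 * (s : ℝ) * (r : ℝ) * (q : ℝ) ^ 2))) := by
  lift q to ℕ using hq.le
  have : NeZero q := ⟨by lia⟩
  have s_ne : (s : ℝ) ≠ 0 := by positivity
  let g : ZMod q × UnitAddCircle := (1, ↑(α / s))
  let μ : Measure (ZMod q × UnitAddCircle) := Measure.addHaarMeasure ⊤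
  have : IsProbabilityMeasure μ := ⟨Measure.addHaarMeasure_self⟩
  have g_dense : DenseRange fun n : ℤ ↦ n • g := denseRange_zsmul_one_prod <|
    AddCircle.denseRange_zsmul_coe_iff.2 (by simpa using hα.div_intCast hs.ne')
  have phase_β : phase q p r g = β := by
    rw [phase_one_coe, hβ, Int.cast_natCast, div_mul_eq_mul_div, mul_div_assoc]
  have phase_α : phase q 0 s g = α := by
    rw [phase_one_coe, Int.cast_zero, zero_div, zero_add, mul_div_cancel₀ _ s_ne]
  have mean_square := tendsto_average_periodizedBernoulli_sub_sq 1 g_dense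
    (continuous_phase p r) (continuous_phase 0 s)
    (measurePreserving_phase (μ := μ) p hr) (measurePreserving_phase (μ := μ) 0 hs.ne')
  simp only [map_nsmul, phase_β, phase_α, periodizedBernoulli_one_nsmul_coe_sub,
    integral_periodizedBernoulli_one_sq, integral_periodizedBernoulli_one_phase_mul_phase
      (Int.isCoprime_iff_gcd_eq_one.2 hpq) hr hs.ne' hrs] at mean_square
  convert mean_square using 2
  push_cast
  ring
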